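/- arXiv:2601.10941 — 2 statements merged into one kernel-verified Lean document; each statement's English description precedes it below -/
import Mathlib

section
/- Under assumptions (I1)–(I4), fix λ ∈ (λ_n, λ_{n+1}) and, for every w ∈ E∖E_n, let m_λ(w) denote the unique global maximizer of J_λ on F_n(w)⁺ (which exists and belongs to NP_λ). Then the map m_λ : E∖E_n → NP_λ is continuous (with respect to the norm topology of E). -/
open Filter Topology Set
open scoped InnerProductSpace

/- Abstract setting: `E = D(A^{1/2})` is a real Hilbert space in which the rescaled
eigenfunctions `ζ_k / √(1+λ_k)` form a Hilbert basis (encoded by `hON` and `hdense` below);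
the `H`-inner product of `u, v ∈ E` is recovered as `∑ₖ ⟨u,ζ_k⟩_H ⟨v,ζ_k⟩_H`, where
`⟨u,ζ_k⟩_H = ⟨u,ζ_k⟩_E / (1+λ_k)`. -/

variable {E : Type*} [NormedAddCommGroup E] [InnerProductSpace ℝ E] [CompleteSpace E]

/-- The `H`-inner-product coefficient `⟨u, ζ_k⟩_H = ⟨u, ζ_k⟩_E / (1 + λ_k)`. -/
noncomputable def coefH (lam : ℕ → ℝ) (ζ : ℕ → E) (u : E) (k : ℕ) : ℝ :=
  ⟪u, ζ k⟫_ℝ / (1 + lam k)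

/-- The square of the `H`-norm: `‖u‖_H² = ∑ₖ ⟨u,ζ_k⟩_H²`. -/
noncomputable def normHsq (lam : ℕ → ℝ) (ζ : ℕ → E) (u : E) : ℝ :=
  ∑' k, (coefH lam ζ u k) ^ 2

/-- The symmetric bilinear form `q_λ(u,v) = ∑ₖ (λ_k − λ) ⟨u,ζ_k⟩_H ⟨v,ζ_k⟩_H`. -/
noncomputable def qForm (lam : ℕ → ℝ) (ζ : ℕ → E) (lambda : ℝ) (u v : E) : ℝ :=
  ∑' k, (lam k - lambda) * (coefH lam ζ u k * coefH lam ζ v k)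

/-- The action functional `J_λ(u) = ½ q_λ(u) − I(u)`. -/
noncomputable def Jfun (lam : ℕ → ℝ) (ζ : ℕ → E) (I : E → ℝ) (lambda : ℝ) (u : E) : ℝ :=
  qForm lam ζ lambda u u / 2 - I u

/-- `E_n`, the span of the eigenfunctions `ζ_0, …, ζ_n` (the first `n+1` of them). -/
noncomputable def Esub (ζ : ℕ → E) (n : ℕ) : Submodule ℝ E :=
  Submodule.span ℝ (ζ '' {k : ℕ | k ≤ n})

/-- `F_n(u) = E_n ⊕ ℝ u`. -/
noncomputable def Fsub (ζ : ℕ → E) (n : ℕ) (u : E) : Submodule ℝ E :=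
  Esub ζ n ⊔ Submodule.span ℝ {u}

/-- `F_n(u)⁺ = E_n ⊕ ℝ⁺ u = {v + t u : v ∈ E_n, t > 0}`. -/
def FsubPlus (ζ : ℕ → E) (n : ℕ) (u : E) : Set E :=
  {w | ∃ v ∈ Esub ζ n, ∃ t : ℝ, 0 < t ∧ w = v + t • u}

/-- The derivative of `J_λ` at `u` applied to `w`: `J_λ'(u)[w] = q_λ(u,w) − I'(u)[w]`. -/
noncomputable def Jderiv (lam : ℕ → ℝ) (ζ : ℕ → E) (I' : E → E →L[ℝ] ℝ)
    (lambda : ℝ) (u w : E) : ℝ :=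
  qForm lam ζ lambda u w - I' u w

/-- The Nehari–Pankov set `NP_λ = {u ∈ E ∖ E_n : J_λ'(u)|_{F_n(u)} = 0}`. -/
def NehariPankov (lam : ℕ → ℝ) (ζ : ℕ → E) (I' : E → E →L[ℝ] ℝ)
    (n : ℕ) (lambda : ℝ) : Set E :=
  {u | u ∉ Esub ζ n ∧ ∀ w ∈ Fsub ζ n u, Jderiv lam ζ I' lambda u w = 0}

/-- The ground-state level `c_λ = inf_{NP_λ} J_λ`. -/
noncomputable def clevel (lam : ℕ → ℝ) (ζ : ℕ → E) (I : E → ℝ) (I' : E → E →L[ℝ] ℝ)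
    (n : ℕ) (lambda : ℝ) : ℝ :=
  sInf (Jfun lam ζ I lambda '' NehariPankov lam ζ I' n lambda)

/-- The set `Q_λ` of minimizers of `J_λ` on `NP_λ`. -/
def Qset (lam : ℕ → ℝ) (ζ : ℕ → E) (I : E → ℝ) (I' : E → E →L[ℝ] ℝ)
    (n : ℕ) (lambda : ℝ) : Set E :=
  {u | u ∈ NehariPankov lam ζ I' n lambda ∧
    Jfun lam ζ I lambda u = clevel lam ζ I I' n lambda}

/-- `E_n^⊥ = {w ∈ E : ⟨w, ζ_k⟩_H = 0 for k = 0, …, n}`. -/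
def EsubPerp (lam : ℕ → ℝ) (ζ : ℕ → E) (n : ℕ) : Set E :=
  {w | ∀ k ≤ n, coefH lam ζ w k = 0}

/-!
Write a point of the half-space `V ⊕ ℝ⁺ w` as `v + t w`, with coordinates `(v, t)` in the
finite-dimensional space `V × ℝ`. As `J` tends to `-∞` along rays, locally uniformly in their
direction, the coordinates of the maximizers over half-spaces `V ⊕ ℝ⁺ x`, for `x` near `w`, stay in
a compact set. By continuity of `J`, each of their cluster points `(v, t)` satisfies `0 ≤ t` and
`J (m w) ≤ J (v + t w)`. The maximizer `u = m w` is critical for `J` on `V ⊕ ℝ u`, and the expansion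
of `J ((1 + s) u + v)` around `u`, assumption (I4) and negativity of the quadratic form on `V` show
that `J ((1 + s) u + v) < J u` for `s ≥ -1` unless `(1 + s) u + v = u`. The cluster point is
therefore unique, and the coordinates converge.
-/

section QuadraticForm

theorem exists_inner_ne_zero_of_mem_span {𝕜 H : Type*} [RCLike 𝕜] [NormedAddCommGroup H]
    [InnerProductSpace 𝕜 H] {S : Set H} {v : H} (hv : v ∈ Submodule.span 𝕜 S) (hv0 : v ≠ 0) :
    ∃ x ∈ S, inner 𝕜 v x ≠ 0 := by
  by_contra! horth
  have hle : Submodule.span 𝕜 S ≤ (𝕜 ∙ v)ᗮ :=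
    Submodule.span_le.2 fun x hx =>
      Submodule.mem_orthogonal_singleton_iff_inner_right.2 (horth x hx)
  exact hv0 (inner_self_eq_zero.1 (Submodule.mem_orthogonal_singleton_iff_inner_right.1 (hle hv)))

theorem sum_norm_inner_mul_norm_inner_le {𝕜 H ι : Type*} [RCLike 𝕜] [NormedAddCommGroup H]
    [InnerProductSpace 𝕜 H] {e : ι → H} (he : Orthonormal 𝕜 e) (u v : H) (s : Finset ι) :
    ∑ i ∈ s, ‖inner 𝕜 (e i) u‖ * ‖inner 𝕜 (e i) v‖ ≤ ‖u‖ * ‖v‖ :=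
  calc ∑ i ∈ s, ‖inner 𝕜 (e i) u‖ * ‖inner 𝕜 (e i) v‖
      ≤ √(∑ i ∈ s, ‖inner 𝕜 (e i) u‖ ^ 2) * √(∑ i ∈ s, ‖inner 𝕜 (e i) v‖ ^ 2) :=
        Real.sum_mul_le_sqrt_mul_sqrt s _ _
    _ ≤ ‖u‖ * ‖v‖ := by
        gcongr <;> exact (Real.sqrt_le_left (norm_nonneg _)).2 (he.sum_inner_products_le _)

theorem summable_norm_inner_mul_norm_inner {𝕜 H ι : Type*} [RCLike 𝕜] [NormedAddCommGroup H]
    [InnerProductSpace 𝕜 H] {e : ι → H} (he : Orthonormal 𝕜 e) (u v : H) :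
    Summable fun i => ‖inner 𝕜 (e i) u‖ * ‖inner 𝕜 (e i) v‖ :=
  summable_of_sum_le (fun _ => by positivity) (sum_norm_inner_mul_norm_inner_le he u v)

theorem tsum_norm_inner_mul_norm_inner_le {𝕜 H ι : Type*} [RCLike 𝕜] [NormedAddCommGroup H]
    [InnerProductSpace 𝕜 H] {e : ι → H} (he : Orthonormal 𝕜 e) (u v : H) :
    ∑' i, ‖inner 𝕜 (e i) u‖ * ‖inner 𝕜 (e i) v‖ ≤ ‖u‖ * ‖v‖ :=
  Real.tsum_le_of_sum_le (fun _ => by positivity) (sum_norm_inner_mul_norm_inner_le he u v)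

variable {F : Type*} [NormedAddCommGroup F] [InnerProductSpace ℝ F] {lam : ℕ → ℝ} {ζ : ℕ → F}

theorem coefH_add (lam : ℕ → ℝ) (ζ : ℕ → F) (u v : F) (k : ℕ) :
    coefH lam ζ (u + v) k = coefH lam ζ u k + coefH lam ζ v k := by
  rw [coefH, coefH, coefH, inner_add_left, add_div]

theorem coefH_smul (lam : ℕ → ℝ) (ζ : ℕ → F) (c : ℝ) (u : F) (k : ℕ) :
    coefH lam ζ (c • u) k = c * coefH lam ζ u k := by
  rw [coefH, coefH, real_inner_smul_left, mul_div_assoc]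

/-- The eigenfunction `ζ_k` rescaled to an `E`-unit vector. -/
noncomputable def unitEigenvector (lam : ℕ → ℝ) (ζ : ℕ → F) (k : ℕ) : F :=
  (√(1 + lam k))⁻¹ • ζ k

theorem orthonormal_unitEigenvector (hlam : ∀ k, 0 < 1 + lam k)
    (hON : ∀ j k, ⟪ζ j, ζ k⟫_ℝ = if j = k then 1 + lam k else 0) :
    Orthonormal ℝ (unitEigenvector lam ζ) := by
  refine orthonormal_iff_ite.2 fun j k => ?_
  rw [unitEigenvector, unitEigenvector, real_inner_smul_left, real_inner_smul_right, hON]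
  split_ifs with hjk
  · subst hjk
    rw [← mul_assoc, ← mul_inv, Real.mul_self_sqrt (hlam j).le, inv_mul_cancel₀ (hlam j).ne']
  · rw [mul_zero, mul_zero]

theorem inner_unitEigenvector (lam : ℕ → ℝ) (ζ : ℕ → F) (k : ℕ) (u : F) :
    ⟪unitEigenvector lam ζ k, u⟫_ℝ = √(1 + lam k) * coefH lam ζ u k := by
  rw [unitEigenvector, real_inner_smul_left, real_inner_comm, coefH, ← mul_div_assoc,
    mul_div_right_comm, Real.sqrt_div_self', one_div]

theorem norm_qForm_term_le (hlam : ∀ k, 0 ≤ lam k) (lambda : ℝ) (u v : F) (k : ℕ) :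
    ‖(lam k - lambda) * (coefH lam ζ u k * coefH lam ζ v k)‖ ≤ (1 + |lambda|) *
      (‖⟪unitEigenvector lam ζ k, u⟫_ℝ‖ * ‖⟪unitEigenvector lam ζ k, v⟫_ℝ‖) := by
  have hpos : 0 < 1 + lam k := by linarith [hlam k]
  have hweight : |lam k - lambda| ≤ (1 + |lambda|) * (1 + lam k) := by
    calc |lam k - lambda| ≤ lam k + |lambda| := by
          simpa only [abs_of_nonneg (hlam k)] using abs_sub (lam k) lambda
      _ ≤ (1 + |lambda|) * (1 + lam k) := by
          linarith [mul_nonneg (abs_nonneg lambda) (hlam k)]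
  rw [inner_unitEigenvector, inner_unitEigenvector, ← norm_mul, mul_mul_mul_comm,
    Real.mul_self_sqrt hpos.le, norm_mul, norm_mul (1 + lam k), Real.norm_of_nonneg hpos.le,
    ← mul_assoc]
  gcongr
  exact hweight

theorem summable_qForm (hlam : ∀ k, 0 ≤ lam k)
    (hON : ∀ j k, ⟪ζ j, ζ k⟫_ℝ = if j = k then 1 + lam k else 0) (lambda : ℝ) (u v : F) :
    Summable fun k => (lam k - lambda) * (coefH lam ζ u k * coefH lam ζ v k) :=
  Summable.of_norm_bounded ((summable_norm_inner_mul_norm_inner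
    (orthonormal_unitEigenvector (fun k => by linarith [hlam k]) hON) u v).mul_left _)
    (norm_qForm_term_le hlam lambda u v)

theorem norm_qForm_le (hlam : ∀ k, 0 ≤ lam k)
    (hON : ∀ j k, ⟪ζ j, ζ k⟫_ℝ = if j = k then 1 + lam k else 0) (lambda : ℝ) (u v : F) :
    ‖qForm lam ζ lambda u v‖ ≤ (1 + |lambda|) * ‖u‖ * ‖v‖ := by
  have he := orthonormal_unitEigenvector (fun k => by linarith [hlam k]) hON
  refine (tsum_of_norm_bounded ((summable_norm_inner_mul_norm_inner he u v).mul_left _).hasSum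
    (norm_qForm_term_le hlam lambda u v)).trans ?_
  rw [tsum_mul_left, mul_assoc]
  gcongr
  exact tsum_norm_inner_mul_norm_inner_le he u v

theorem qForm_comm (lam : ℕ → ℝ) (ζ : ℕ → F) (lambda : ℝ) (u v : F) :
    qForm lam ζ lambda u v = qForm lam ζ lambda v u :=
  tsum_congr fun k => by rw [mul_comm (coefH lam ζ u k)]

theorem qForm_add_left (hlam : ∀ k, 0 ≤ lam k)
    (hON : ∀ j k, ⟪ζ j, ζ k⟫_ℝ = if j = k then 1 + lam k else 0) (lambda : ℝ) (u u' v : F) :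
    qForm lam ζ lambda (u + u') v = qForm lam ζ lambda u v + qForm lam ζ lambda u' v := by
  rw [qForm, qForm, qForm, ← (summable_qForm hlam hON lambda u v).tsum_add
    (summable_qForm hlam hON lambda u' v)]
  exact tsum_congr fun k => by rw [coefH_add, add_mul, mul_add]

theorem qForm_smul_left (lam : ℕ → ℝ) (ζ : ℕ → F) (lambda c : ℝ) (u v : F) :
    qForm lam ζ lambda (c • u) v = c * qForm lam ζ lambda u v := by
  rw [qForm, qForm, ← tsum_mul_left]
  exact tsum_congr fun k => by rw [coefH_smul, mul_assoc, mul_left_comm]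

/-- `q_λ(·, ·)` as a bounded bilinear form on `E`. -/
noncomputable def qFormCLM (hlam : ∀ k, 0 ≤ lam k)
    (hON : ∀ j k, ⟪ζ j, ζ k⟫_ℝ = if j = k then 1 + lam k else 0) (lambda : ℝ) :
    F →L[ℝ] F →L[ℝ] ℝ :=
  (LinearMap.mk₂ ℝ (qForm lam ζ lambda) (qForm_add_left hlam hON lambda)
    (qForm_smul_left lam ζ lambda)
    (fun u v v' => by simp only [qForm_comm lam ζ lambda u, qForm_add_left hlam hON])
    (fun c u v => by simp only [qForm_comm lam ζ lambda u, qForm_smul_left, smul_eq_mul])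
    ).mkContinuous₂ (1 + |lambda|) (norm_qForm_le hlam hON lambda)

instance finiteDimensional_Esub (ζ : ℕ → F) (n : ℕ) : FiniteDimensional ℝ (Esub ζ n) :=
  FiniteDimensional.span_of_finite ℝ ((Set.finite_le_nat n).image ζ)

theorem inner_eq_zero_of_mem_Esub (hON : ∀ j k, j ≠ k → ⟪ζ j, ζ k⟫_ℝ = 0) {n k : ℕ}
    (hk : n < k) {v : F} (hv : v ∈ Esub ζ n) : ⟪v, ζ k⟫_ℝ = 0 := by
  have hle : Esub ζ n ≤ (ℝ ∙ ζ k)ᗮ := by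
    refine Submodule.span_le.2 ?_
    rintro _ ⟨j, hj, rfl⟩
    exact Submodule.mem_orthogonal_singleton_iff_inner_left.2 (hON j k (ne_of_lt (hj.trans_lt hk)))
  exact Submodule.mem_orthogonal_singleton_iff_inner_left.1 (hle hv)

theorem qForm_self_neg_of_mem_Esub (hlam : ∀ k, 0 ≤ lam k)
    (hON : ∀ j k, ⟪ζ j, ζ k⟫_ℝ = if j = k then 1 + lam k else 0) {n : ℕ} {lambda : ℝ}
    (hlambda : ∀ k ≤ n, lam k < lambda) {v : F} (hv : v ∈ Esub ζ n) (hv0 : v ≠ 0) :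
    qForm lam ζ lambda v v < 0 := by
  have hweight : ∀ k ≤ n, lam k - lambda < 0 := fun k hk => sub_neg_of_lt (hlambda k hk)
  have hterm : ∀ k, (lam k - lambda) * (coefH lam ζ v k * coefH lam ζ v k) ≤ 0 := fun k => by
    rcases le_or_gt k n with hk | hk
    · exact mul_nonpos_of_nonpos_of_nonneg (hweight k hk).le (mul_self_nonneg _)
    · have hinner := inner_eq_zero_of_mem_Esub (fun i j hij => (hON i j).trans (if_neg hij)) hk hv
      rw [coefH, hinner, zero_div, mul_zero, mul_zero]
  obtain ⟨_, ⟨k, hk, rfl⟩, hinner⟩ := exists_inner_ne_zero_of_mem_span hv hv0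
  have hcoef : coefH lam ζ v k ≠ 0 := div_ne_zero hinner (by linarith [hlam k])
  have hterm_k : (lam k - lambda) * (coefH lam ζ v k * coefH lam ζ v k) < 0 :=
    mul_neg_of_neg_of_pos (hweight k hk) (mul_self_pos.2 hcoef)
  calc qForm lam ζ lambda v v < ∑' _ : ℕ, (0 : ℝ) :=
        (summable_qForm hlam hON lambda v v).tsum_lt_tsum hterm hterm_k summable_zero
    _ = 0 := tsum_zero

end QuadraticForm

section Maximizers

theorem tendsto_maximizer_of_unique {X Y R : Type*} [TopologicalSpace X] [TopologicalSpace Y]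
    [LinearOrder R] [TopologicalSpace R] [OrderClosedTopology R] {Φ : X → Y → R}
    (hΦ : Continuous (Function.uncurry Φ)) {K : Set Y} (hK : IsCompact K) {x₀ : X}
    {l : Filter X} (hl : l ≤ 𝓝 x₀) {f : X → Y} (hfK : ∀ᶠ x in l, f x ∈ K) {y₀ : Y}
    (hmax : ∀ᶠ x in l, Φ x y₀ ≤ Φ x (f x)) (huniq : ∀ y ∈ K, Φ x₀ y₀ ≤ Φ x₀ y → y = y₀) :
    Tendsto f l (𝓝 y₀) := by
  refine hK.tendsto_nhds_of_unique_mapClusterPt hfK fun y hy hcluster =>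
    huniq y hy (le_of_not_gt fun hlt => ?_)
  have hnear : ∀ᶠ q : X × Y in 𝓝 x₀ ×ˢ 𝓝 y, Φ q.1 q.2 < Φ q.1 y₀ := by
    rw [← nhds_prod_eq]
    exact (hΦ.tendsto (x₀, y)).eventually_lt
      ((hΦ.comp (continuous_fst.prodMk continuous_const)).tendsto (x₀, y)) hlt
  obtain ⟨P, hP, Q, hQ, hPQ⟩ := eventually_prod_iff.1 hnear
  obtain ⟨x, hQx, hPx, hle⟩ := ((hcluster.frequently hQ).and_eventually
    ((hP.filter_mono hl).and hmax)).exists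
  exact (hPQ hPx hQx).not_ge hle

theorem eventually_forall_of_isCompact {X Y : Type*} [TopologicalSpace Y] {l : Filter X}
    {K : Set Y} (hK : IsCompact K) {P : X → Y → Prop}
    (hP : ∀ y ∈ K, ∀ᶠ q : X × Y in l ×ˢ 𝓝 y, P q.1 q.2) : ∀ᶠ x in l, ∀ y ∈ K, P x y :=
  Eventually.mono (Eventually.curry (hK.mem_prod_nhdsSet_of_forall hP))
    fun _ h => h.self_of_nhdsSet

section OpenHalfspace

variable {F : Type*} [AddCommGroup F] [Module ℝ F] {V : Submodule ℝ F}

/-- The open half-space `V ⊕ ℝ⁺ w = {v + t w : v ∈ V, t > 0}` of `V ⊕ ℝ w`; it is `F_n(w)⁺` when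
`V = E_n`. -/
def openHalfspace (V : Submodule ℝ F) (w : F) : Set F :=
  {x | ∃ v ∈ V, ∃ t : ℝ, 0 < t ∧ x = v + t • w}

theorem mem_openHalfspace_self (V : Submodule ℝ F) (w : F) : w ∈ openHalfspace V w :=
  ⟨0, zero_mem V, 1, one_pos, by simp only [zero_add, one_smul]⟩

theorem smul_add_mem_openHalfspace {w x v : F} {c : ℝ} (hc : 0 < c)
    (hx : x ∈ openHalfspace V w) (hv : v ∈ V) : c • x + v ∈ openHalfspace V w := by
  obtain ⟨v', hv', t, ht, rfl⟩ := hx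
  exact ⟨c • v' + v, add_mem (V.smul_mem c hv') hv, c * t, mul_pos hc ht, by module⟩

theorem notMem_of_mem_openHalfspace {w x : F} (hw : w ∉ V) (hx : x ∈ openHalfspace V w) :
    x ∉ V := by
  obtain ⟨v, hv, t, ht, rfl⟩ := hx
  rwa [V.add_mem_iff_right hv, V.smul_mem_iff ht.ne']

theorem injective_coe_add_smul {w : F} (hw : w ∉ V) :
    Function.Injective fun p : V × ℝ => (p.1 : F) + p.2 • w := by
  rintro ⟨v, t⟩ ⟨v', t'⟩ h
  have hmem : (t - t') • w ∈ V := by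
    have hdiff : (t - t') • w = v' - v := by
      rw [sub_smul, sub_eq_sub_iff_add_eq_add, add_comm (t • w)]
      exact h
    exact hdiff ▸ sub_mem v'.2 v.2
  have ht : t = t' := by
    by_contra hne
    exact hw ((V.smul_mem_iff (sub_ne_zero.2 hne)).1 hmem)
  subst ht
  exact Prod.ext (Subtype.ext (add_right_cancel h)) rfl

end OpenHalfspace

variable {F : Type*} [NormedAddCommGroup F] [NormedSpace ℝ F] {V : Submodule ℝ F}

/-- Compactness of the unit sphere of `V × ℝ` makes the decay uniform in the direction. -/
theorem tendsto_coe_add_smul_atBot [FiniteDimensional ℝ V] {J : F → ℝ}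
    (hJ : ∀ e ≠ 0, Tendsto (fun q : ℝ × F => J (q.1 • q.2)) (atTop ×ˢ 𝓝 e) atBot)
    {w : F} (hw : w ∉ V) :
    Tendsto (fun q : F × V × ℝ => J (q.2.1 + q.2.2 • q.1)) (𝓝 w ×ˢ cocompact (V × ℝ)) atBot := by
  refine tendsto_atBot.2 fun c => ?_
  have hsphere : ∀ᶠ q : ℝ × F in atTop ×ˢ 𝓝 w, ∀ a ∈ Metric.sphere (0 : V × ℝ) 1,
      J (q.1 • (a.1 + a.2 • q.2)) ≤ c := by
    refine eventually_forall_of_isCompact (isCompact_sphere 0 1) fun a ha => ?_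
    have hne : (a.1 : F) + a.2 • w ≠ 0 := fun h0 =>
      ne_zero_of_mem_unit_sphere ⟨a, ha⟩ (injective_coe_add_smul hw (by simpa using h0))
    have hpair : Tendsto (fun z : (ℝ × F) × V × ℝ => (z.1.2, z.2)) ((atTop ×ˢ 𝓝 w) ×ˢ 𝓝 a)
        (𝓝 (w, a)) := (tendsto_snd.comp tendsto_fst).prodMk_nhds tendsto_snd
    have hcont : Continuous fun z : F × V × ℝ => (z.2.1 : F) + z.2.2 • z.1 := by fun_prop
    have hdir := (tendsto_fst.comp tendsto_fst).prodMk ((hcont.tendsto (w, a)).comp hpair)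
    exact ((hJ _ hne).comp hdir).eventually_le_atBot c
  have hnorm : Tendsto (fun q : F × V × ℝ => (‖q.2‖, q.1)) (𝓝 w ×ˢ cocompact (V × ℝ))
      (atTop ×ˢ 𝓝 w) :=
    ((tendsto_norm_cocompact_atTop (E := V × ℝ)).comp tendsto_snd).prodMk tendsto_fst
  have hpos : ∀ᶠ q : F × V × ℝ in 𝓝 w ×ˢ cocompact (V × ℝ), 0 < ‖q.2‖ :=
    ((tendsto_norm_cocompact_atTop (E := V × ℝ)).comp tendsto_snd).eventually_gt_atTop 0
  filter_upwards [hnorm.eventually hsphere, hpos] with ⟨x, p⟩ hx hp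
  have hunit : ‖p‖⁻¹ • p ∈ Metric.sphere (0 : V × ℝ) 1 := by
    rw [mem_sphere_zero_iff_norm, norm_smul, norm_inv, norm_norm, inv_mul_cancel₀ hp.ne']
  have hscale : ‖p‖ • (((‖p‖⁻¹ • p).1 : F) + (‖p‖⁻¹ • p).2 • x) = p.1 + p.2 • x := by
    simp only [Prod.smul_fst, Prod.smul_snd, Submodule.coe_smul, smul_eq_mul, mul_smul,
      ← smul_add, smul_inv_smul₀ hp.ne']
  exact hscale ▸ hx _ hunit

theorem exists_isCompact_forall_notMem_lt [FiniteDimensional ℝ V] {J : F → ℝ} (hJ : Continuous J)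
    (hJbot : ∀ e ≠ 0, Tendsto (fun q : ℝ × F => J (q.1 • q.2)) (atTop ×ˢ 𝓝 e) atBot)
    {w : F} (hw : w ∉ V) :
    ∃ K : Set (V × ℝ), IsCompact K ∧ ∀ᶠ x in 𝓝 w, ∀ p ∉ K, J (p.1 + p.2 • x) < J x := by
  obtain ⟨P, hP, Q, hQ, hPQ⟩ := eventually_prod_iff.1
    ((tendsto_coe_add_smul_atBot hJbot hw).eventually_le_atBot (J w - 1))
  obtain ⟨K, hK, hKQ⟩ := mem_cocompact.1 hQ
  have hJw : ∀ᶠ x in 𝓝 w, J w - 1 < J x := (hJ.tendsto w).eventually_const_lt (sub_one_lt _)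
  refine ⟨K, hK, ?_⟩
  filter_upwards [hP, hJw] with x hPx hJx p hp
  exact (hPQ hPx (hKQ hp)).trans_lt hJx

theorem continuousOn_maximizer [FiniteDimensional ℝ V] {J : F → ℝ} (hJ : Continuous J)
    (hJbot : ∀ e ≠ 0, Tendsto (fun q : ℝ × F => J (q.1 • q.2)) (atTop ×ˢ 𝓝 e) atBot)
    {m : F → F} (hm : ∀ w ∉ V, m w ∈ openHalfspace V w ∧ IsMaxOn J (openHalfspace V w) (m w))
    (huniq : ∀ w ∉ V, ∀ v ∈ V, ∀ t : ℝ, 0 ≤ t → J (m w) ≤ J (v + t • w) → v + t • w = m w) :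
    ContinuousOn m {w | w ∉ V} := by
  have hcoord : ∀ w ∉ V, ∃ p : V × ℝ, 0 < p.2 ∧ m w = p.1 + p.2 • w := fun w hw => by
    obtain ⟨v, hv, t, ht, hmw⟩ := (hm w hw).1
    exact ⟨(⟨v, hv⟩, t), ht, hmw⟩
  choose! p hp_pos hmp using hcoord
  intro w hw
  have hmem : ∀ᶠ x in 𝓝[{x | x ∉ V}] w, x ∉ V := eventually_mem_nhdsWithin
  obtain ⟨K, hK, hlt⟩ := exists_isCompact_forall_notMem_lt hJ hJbot hw
  have hpK : ∀ᶠ x in 𝓝[{x | x ∉ V}] w, p x ∈ K ∩ {q | 0 ≤ q.2} := by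
    filter_upwards [hmem, nhdsWithin_le_nhds hlt] with x hx hltx
    refine ⟨by_contra fun hpx => (hltx _ hpx).not_ge ?_, (hp_pos x hx).le⟩
    rw [← hmp x hx]
    exact (hm x hx).2 (mem_openHalfspace_self V x)
  have hp : ContinuousWithinAt p {x | x ∉ V} w := by
    refine tendsto_maximizer_of_unique (Φ := fun x q => J (q.1 + q.2 • x)) (by fun_prop)
      (hK.inter_right (isClosed_le continuous_const continuous_snd)) nhdsWithin_le_nhds hpK ?_ ?_
    · filter_upwards [hmem] with x hx
      rw [← hmp x hx]
      exact (hm x hx).2 ⟨_, (p w).1.2, _, hp_pos w hw, rfl⟩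
    · intro q hq hle
      refine injective_coe_add_smul hw ?_
      simp only [← hmp w hw] at hle ⊢
      exact huniq w hw _ q.1.2 _ hq.2 hle
  have hcont : ContinuousWithinAt (fun x => ((p x).1 : F) + (p x).2 • x) {x | x ∉ V} w :=
    (continuous_subtype_val.continuousAt.comp_continuousWithinAt hp.fst).add
      (hp.snd.smul continuousWithinAt_id)
  exact hcont.congr hmp (hmp w hw)

end Maximizers

section ActionFunctional

variable {F : Type*} [NormedAddCommGroup F] [NormedSpace ℝ F] {V : Submodule ℝ F}
  {B : F →L[ℝ] F →L[ℝ] ℝ} {I : F → ℝ} {φ : F →L[ℝ] ℝ}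

/-- The action functional `J(u) = ½ B(u, u) − I(u)` of a bounded bilinear form `B`; it is `J_λ` when
`B` is the bilinear form of `q_λ`. -/
noncomputable def actionFunctional (B : F →L[ℝ] F →L[ℝ] ℝ) (I : F → ℝ) (u : F) : ℝ :=
  B u u / 2 - I u

theorem continuous_actionFunctional (B : F →L[ℝ] F →L[ℝ] ℝ) (hI : Continuous I) :
    Continuous (actionFunctional B I) := by
  unfold actionFunctional
  fun_prop

theorem hasFDerivAt_actionFunctional (hB : ∀ u v, B u v = B v u) {u : F}
    (hI : HasFDerivAt I φ u) : HasFDerivAt (actionFunctional B I) (B u - φ) u := by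
  have hquad : HasFDerivAt (fun x => B x x / 2) (B u) u := by
    refine (((B.hasFDerivAt (x := u)).clm_apply (hasFDerivAt_id u)).mul_const 2⁻¹).congr_fderiv ?_
    ext x
    simp only [id_eq, smul_apply, add_apply, ContinuousLinearMap.comp_id,
      ContinuousLinearMap.flip_apply, smul_eq_mul, hB x u]
    ring
  exact hquad.sub hI

theorem actionFunctional_smul {r : ℝ} (hr : r ≠ 0) (y : F) :
    actionFunctional B I (r • y) = r ^ 2 * (B y y / 2 - I (r • y) / r ^ 2) := by
  simp only [actionFunctional, map_smul, smul_apply, smul_eq_mul]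
  field_simp

theorem tendsto_actionFunctional_smul_atBot (hI : Continuous I)
    (hmono : ∀ u ≠ 0, MonotoneOn (fun t : ℝ => I (t • u) / t ^ 2) (Ioi 0)) {e : F} (he : e ≠ 0)
    (htop : Tendsto (fun t : ℝ => I (t • e) / t ^ 2) atTop atTop) :
    Tendsto (fun q : ℝ × F => actionFunctional B I (q.1 • q.2)) (atTop ×ˢ 𝓝 e) atBot := by
  obtain ⟨T, hTe, hT⟩ : ∃ T : ℝ, B e e / 2 + 1 < I (T • e) / T ^ 2 ∧ 0 < T :=
    ((htop.eventually_gt_atTop _).and (eventually_gt_atTop 0)).exists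
  have hnear : ∀ᶠ y in 𝓝 e, B y y / 2 - I (T • y) / T ^ 2 < -1 := by
    have hcont : Continuous fun y => B y y / 2 - I (T • y) / T ^ 2 := by fun_prop
    exact (hcont.tendsto e).eventually_lt_const (by linarith)
  have hle : ∀ᶠ q : ℝ × F in atTop ×ˢ 𝓝 e, actionFunctional B I (q.1 • q.2) ≤ -q.1 ^ 2 := by
    filter_upwards [(eventually_ge_atTop T).prod_mk (hnear.and (eventually_ne_nhds he))]
      with ⟨r, y⟩ ⟨hr, hy, hy0⟩
    have hr0 : 0 < r := hT.trans_le hr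
    have hquot : I (T • y) / T ^ 2 ≤ I (r • y) / r ^ 2 := hmono y hy0 hT hr0 hr
    calc actionFunctional B I (r • y) = r ^ 2 * (B y y / 2 - I (r • y) / r ^ 2) :=
          actionFunctional_smul hr0.ne' y
      _ ≤ r ^ 2 * (-1) := by gcongr; linarith
      _ = -r ^ 2 := mul_neg_one _
  exact tendsto_atBot_mono' _ hle
    (tendsto_neg_atTop_atBot.comp ((tendsto_pow_atTop two_ne_zero).comp tendsto_fst))

theorem apply_eq_deriv_of_isMaxOn_openHalfspace (hB : ∀ u v, B u v = B v u) {u w : F}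
    (hI : HasFDerivAt I φ u) (hu : u ∈ openHalfspace V w)
    (hmax : IsMaxOn (actionFunctional B I) (openHalfspace V w) u) (c : ℝ) {v : F} (hv : v ∈ V) :
    B u (c • u + v) = φ (c • u + v) := by
  have hpos : ∀ᶠ t : ℝ in 𝓝 0, 0 < 1 + t * c := by
    have hcont : Continuous fun t : ℝ => 1 + t * c := by fun_prop
    exact (hcont.tendsto 0).eventually_const_lt (by simp only [zero_mul, add_zero, one_pos])
  have hline : ∀ᶠ t : ℝ in 𝓝 0, u + t • (c • u + v) ∈ openHalfspace V w := by
    filter_upwards [hpos] with t ht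
    have hsplit : u + t • (c • u + v) = (1 + t * c) • u + t • v := by module
    exact hsplit ▸ smul_add_mem_openHalfspace ht hu (V.smul_mem t hv)
  exact sub_eq_zero.1 (hmax.hasLineDerivAt_eq_zero
    ((hasFDerivAt_actionFunctional hB hI).hasLineDerivAt _) hline)

/-- Criticality of `u` cancels every term of the expansion that is linear in `v`, leaving the
expression of assumption (I4) and `B v v / 2`. -/
theorem actionFunctional_smul_add_sub (hB : ∀ u v, B u v = B v u) {u v : F} {s : ℝ}
    (hcrit : B u ((s * (s / 2 + 1)) • u + (1 + s) • v) =
      φ ((s * (s / 2 + 1)) • u + (1 + s) • v)) :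
    actionFunctional B I ((1 + s) • u + v) - actionFunctional B I u =
      I u - I ((1 + s) • u + v) + φ ((s * (s / 2 + 1)) • u + (1 + s) • v) + B v v / 2 := by
  rw [← hcrit]
  simp only [actionFunctional, map_add, map_smul, add_apply, smul_apply, smul_eq_mul, hB v u]
  ring

theorem smul_add_eq_self_of_actionFunctional_le (hB : ∀ u v, B u v = B v u)
    (hneg : ∀ v ∈ V, v ≠ 0 → B v v < 0) {u : F}
    (hI4 : ∀ v : F, ∀ s : ℝ, -1 ≤ s →
      I u - I ((1 + s) • u + v) + φ ((s * (s / 2 + 1)) • u + (1 + s) • v) ≤ 0)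
    (hI4strict : ∀ s : ℝ, -1 ≤ s → s ≠ 0 →
      I u - I ((1 + s) • u) + φ ((s * (s / 2 + 1)) • u) < 0)
    (hcrit : ∀ c : ℝ, ∀ v ∈ V, B u (c • u + v) = φ (c • u + v)) {v : F} (hv : v ∈ V) {s : ℝ}
    (hs : -1 ≤ s) (hle : actionFunctional B I u ≤ actionFunctional B I ((1 + s) • u + v)) :
    (1 + s) • u + v = u := by
  have hsub := actionFunctional_smul_add_sub (I := I) hB (hcrit _ _ (V.smul_mem (1 + s) hv))
  have hv0 : v = 0 := by
    by_contra hne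
    linarith [hI4 v s hs, hneg v hv hne]
  subst hv0
  have hs0 : s = 0 := by
    by_contra hne
    simp only [smul_zero, add_zero, map_zero, zero_div] at hsub hle
    linarith [hI4strict s hs hne]
  rw [hs0, add_zero, add_zero, one_smul]

theorem add_smul_eq_of_actionFunctional_le (hB : ∀ u v, B u v = B v u)
    (hneg : ∀ v ∈ V, v ≠ 0 → B v v < 0) {u w : F} (hI : HasFDerivAt I φ u)
    (hI4 : ∀ v : F, ∀ s : ℝ, -1 ≤ s →
      I u - I ((1 + s) • u + v) + φ ((s * (s / 2 + 1)) • u + (1 + s) • v) ≤ 0)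
    (hI4strict : ∀ s : ℝ, -1 ≤ s → s ≠ 0 →
      I u - I ((1 + s) • u) + φ ((s * (s / 2 + 1)) • u) < 0)
    (hu : u ∈ openHalfspace V w)
    (hmax : IsMaxOn (actionFunctional B I) (openHalfspace V w) u) {v : F} (hv : v ∈ V) {t : ℝ}
    (ht : 0 ≤ t) (hle : actionFunctional B I u ≤ actionFunctional B I (v + t • w)) :
    v + t • w = u := by
  have hcrit : ∀ c : ℝ, ∀ x ∈ V, B u (c • u + x) = φ (c • u + x) := fun c x hx =>
    apply_eq_deriv_of_isMaxOn_openHalfspace hB hI hu hmax c hx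
  obtain ⟨v₀, hv₀, t₀, ht₀, hut⟩ := id hu
  have hrewrite : v + t • w = (1 + (t / t₀ - 1)) • u + (v - (t / t₀) • v₀) := by
    rw [hut, add_sub_cancel, smul_add, smul_smul, div_mul_cancel₀ _ ht₀.ne']
    abel
  have hs : -1 ≤ t / t₀ - 1 := by linarith [div_nonneg ht ht₀.le]
  rw [hrewrite] at hle ⊢
  exact smul_add_eq_self_of_actionFunctional_le hB hneg hI4 hI4strict hcrit
    (sub_mem hv (V.smul_mem _ hv₀)) hs hle

end ActionFunctional

theorem maximizer_map_continuous_general {F : Type*} [NormedAddCommGroup F] [NormedSpace ℝ F]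
    (V : Submodule ℝ F) [FiniteDimensional ℝ V]
    (B : F →L[ℝ] F →L[ℝ] ℝ) (hB : ∀ u v, B u v = B v u)
    (hneg : ∀ v ∈ V, v ≠ 0 → B v v < 0)
    (I : F → ℝ) (I' : F → F →L[ℝ] ℝ) (hI : ∀ u, HasFDerivAt I (I' u) u)
    (hmono : ∀ u ≠ 0, MonotoneOn (fun t : ℝ => I (t • u) / t ^ 2) (Ioi 0))
    (htop : ∀ u ≠ 0, Tendsto (fun t : ℝ => I (t • u) / t ^ 2) atTop atTop)
    (hI4 : ∀ u ≠ 0, ∀ v : F, ∀ s : ℝ, -1 ≤ s →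
      I u - I ((1 + s) • u + v) + I' u ((s * (s / 2 + 1)) • u + (1 + s) • v) ≤ 0)
    (hI4strict : ∀ u ≠ 0, ∀ s : ℝ, -1 ≤ s → s ≠ 0 →
      I u - I ((1 + s) • u) + I' u ((s * (s / 2 + 1)) • u) < 0)
    (m : F → F)
    (hm : ∀ w ∉ V, m w ∈ openHalfspace V w ∧
      IsMaxOn (actionFunctional B I) (openHalfspace V w) (m w)) :
    ContinuousOn m {w | w ∉ V} := by
  have hIcont : Continuous I := continuous_iff_continuousAt.2 fun u => (hI u).continuousAt
  refine continuousOn_maximizer (continuous_actionFunctional B hIcont)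
    (fun e he => tendsto_actionFunctional_smul_atBot hIcont hmono he (htop e he)) hm
    fun w hw v hv t ht => ?_
  have hm0 : m w ≠ 0 := fun h0 => notMem_of_mem_openHalfspace hw (hm w hw).1 (h0 ▸ V.zero_mem)
  exact add_smul_eq_of_actionFunctional_le hB hneg (hI _) (hI4 _ hm0) (hI4strict _ hm0)
    (hm w hw).1 (hm w hw).2 hv ht

/-- The map `m_λ : E ∖ E_n → NP_λ`, assigning to `w` the unique global
maximizer of `J_λ` on `F_n(w)⁺`, is continuous. -/
theorem maximizer_map_continuous {E : Type*} [NormedAddCommGroup E]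
    [InnerProductSpace ℝ E] [CompleteSpace E]
    (lam : ℕ → ℝ) (ζ : ℕ → E)
    (hlam_mono : Monotone lam) (hlam_nonneg : ∀ k, 0 ≤ lam k)
    (hlam_top : Tendsto lam atTop atTop)
    (hON : ∀ j k, ⟪ζ j, ζ k⟫_ℝ = if j = k then 1 + lam k else 0)
    (hdense : (Submodule.span ℝ (Set.range ζ)).topologicalClosure = ⊤)
    (I : E → ℝ) (I' : E → E →L[ℝ] ℝ)
    (hIderiv : ∀ u, HasFDerivAt I (I' u) u) (hIderiv_cont : Continuous I')
    (hI1 : ∀ (u : ℕ → E) (a : E),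
      (∀ φ : E →L[ℝ] ℝ, Tendsto (fun j => φ (u j)) atTop (𝓝 (φ a))) →
      Tendsto (fun j => I (u j)) atTop (𝓝 (I a)))
    (hI2 : I 0 = 0 ∧ ∀ u : E, u ≠ 0 → 0 < I u)
    (hI3mono : ∀ u : E, u ≠ 0 → MonotoneOn (fun t : ℝ => I (t • u) / t ^ 2) (Ioi 0))
    (hI3zero : ∀ u : E, u ≠ 0 → Tendsto (fun t : ℝ => I (t • u) / t ^ 2) (𝓝[>] 0) (𝓝 0))
    (hI3top : ∀ u : E, u ≠ 0 → Tendsto (fun t : ℝ => I (t • u) / t ^ 2) atTop atTop)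
    (hI4 : ∀ u : E, u ≠ 0 → ∀ v : E, ∀ s : ℝ, -1 ≤ s →
      I u - I ((1 + s) • u + v) + I' u ((s * (s / 2 + 1)) • u + (1 + s) • v) ≤ 0)
    (hI4strict : ∀ u : E, u ≠ 0 → ∀ s : ℝ, -1 ≤ s → s ≠ 0 →
      I u - I ((1 + s) • u) + I' u ((s * (s / 2 + 1)) • u) < 0)
    (n : ℕ)
    (lambda : ℝ) (hlambda : lambda ∈ Ioo (lam n) (lam (n + 1)))
    (m : E → E)
    (hm : ∀ w : E, w ∉ Esub ζ n →
      m w ∈ FsubPlus ζ n w ∧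
      (∀ x ∈ FsubPlus ζ n w, Jfun lam ζ I lambda x ≤ Jfun lam ζ I lambda (m w)) ∧
      m w ∈ NehariPankov lam ζ I' n lambda) :
    ContinuousOn m {w : E | w ∉ Esub ζ n} := by
  exact maximizer_map_continuous_general (Esub ζ n) (qFormCLM hlam_nonneg hON lambda)
    (qForm_comm lam ζ lambda)
    (fun _ => qForm_self_neg_of_mem_Esub hlam_nonneg hON fun _ hk =>
      (hlam_mono hk).trans_lt hlambda.1)
    I I' hIderiv hI3mono hI3top hI4 hI4strict m fun w hw => ⟨(hm w hw).1, (hm w hw).2.1⟩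
end

section
/- Let E be a real normed space and let I : E → ℝ be continuous and satisfy: (I2) I(0) = 0 and I(u) > 0 for all u ∈ E∖{0}; (I3) for every u ∈ E∖{0} the function t ↦ I(tu)/t² is nondecreasing on (0,∞) with limit 0 as t → 0⁺ and limit +∞ as t → +∞. Then for every ε > 0 and every compact set C ⊂ E∖{0} there exists κ > 0 such that I(tu) ≥ κ t² for all u ∈ C and all t ≥ ε. -/
open Filter Topology Set

/-!
Minimise `u ↦ I (ε • u)` over the compact set `C`, which `ε • ·` keeps away from the origin: the
minimum `m` is positive. Monotonicity of `t ↦ I (t • u) / g t`, where `g t = t ^ 2` in the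
quadratic case, then carries the bound `m / g ε` on this quotient from `t = ε` to every `t ≥ ε`,
with a constant independent of `u`.
-/

theorem exists_gt_forall_le_of_isCompact_of_lowerSemicontinuousOn
    {X α : Type*} [TopologicalSpace X] [LinearOrder α] [NoMaxOrder α] {f : X → α} {s : Set X}
    {a : α} (hs : IsCompact s) (hf : LowerSemicontinuousOn f s) (ha : ∀ x ∈ s, a < f x) :
    ∃ b, a < b ∧ ∀ x ∈ s, b ≤ f x := by
  rcases s.eq_empty_or_nonempty with rfl | hne
  · obtain ⟨b, hb⟩ := exists_gt a
    exact ⟨b, hb, fun _ hx ↦ hx.elim⟩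
  · obtain ⟨x, hx, hmin⟩ := hf.exists_isMinOn hne hs
    exact ⟨f x, ha x hx, fun _ hy ↦ hmin hy⟩

theorem div_mul_le_of_monotoneOn_div
    {α 𝕜 : Type*} [Preorder α] [Field 𝕜] [LinearOrder 𝕜] [IsStrictOrderedRing 𝕜]
    {f g : α → 𝕜} {s : Set α} {a b : α} (h : MonotoneOn (fun x ↦ f x / g x) s)
    (ha : a ∈ s) (hb : b ∈ s) (hab : a ≤ b) (hgb : 0 < g b) :
    f a / g a * g b ≤ f b :=
  (le_div_iff₀ hgb).1 (h ha hb hab)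

theorem uniform_quadratic_lower_bound_on_compacts_general
    {E : Type*} [AddCommGroup E] [Module ℝ E] [TopologicalSpace E] [ContinuousConstSMul ℝ E]
    {I : E → ℝ} {g : ℝ → ℝ} (hI : LowerSemicontinuousOn I {0}ᶜ)
    (hI_pos : ∀ u, u ≠ 0 → 0 < I u) (hg_pos : ∀ t, 0 < t → 0 < g t)
    (hmono : ∀ u, u ≠ 0 → MonotoneOn (fun t : ℝ ↦ I (t • u) / g t) (Ioi 0))
    {ε : ℝ} (hε : 0 < ε) {C : Set E} (hC : IsCompact C) (hC0 : C ⊆ {0}ᶜ) :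
    ∃ κ : ℝ, 0 < κ ∧ ∀ u ∈ C, ∀ t : ℝ, ε ≤ t → κ * g t ≤ I (t • u) := by
  have hmaps : MapsTo (ε • · : E → E) C {0}ᶜ := fun u hu ↦ smul_ne_zero hε.ne' (hC0 hu)
  have hlsc : LowerSemicontinuousOn (fun u ↦ I (ε • u)) C :=
    hI.comp (continuous_const_smul ε).continuousOn hmaps
  obtain ⟨m, hm_pos, hm⟩ := exists_gt_forall_le_of_isCompact_of_lowerSemicontinuousOn hC hlsc
    fun u hu ↦ hI_pos _ (hmaps hu)
  have hgε_pos : 0 < g ε := hg_pos ε hε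
  refine ⟨m / g ε, div_pos hm_pos hgε_pos, fun u hu t ht ↦ ?_⟩
  have ht_pos : 0 < t := hε.trans_le ht
  have hgt_pos : 0 < g t := hg_pos t ht_pos
  calc
    m / g ε * g t ≤ I (ε • u) / g ε * g t := by gcongr; exact hm u hu
    _ ≤ I (t • u) := div_mul_le_of_monotoneOn_div (f := fun t ↦ I (t • u))
      (hmono u (hC0 hu)) hε ht_pos ht hgt_pos

/-- If `I : E → ℝ` is continuous on a real normed space, `I(0) = 0`,
`I(u) > 0` for `u ≠ 0`, and for every `u ≠ 0` the map `t ↦ I(tu)/t²` is nondecreasing on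
`(0,∞)` with limits `0` at `0⁺` and `+∞` at `+∞`, then for every `ε > 0` and every compact
set `C ⊆ E ∖ {0}` there is `κ > 0` with `I(tu) ≥ κ t²` for all `u ∈ C` and `t ≥ ε`. -/
theorem uniform_quadratic_lower_bound_on_compacts
    {E : Type*} [NormedAddCommGroup E] [NormedSpace ℝ E]
    (I : E → ℝ) (hIcont : Continuous I)
    (hI2 : I 0 = 0 ∧ ∀ u : E, u ≠ 0 → 0 < I u)
    (hI3mono : ∀ u : E, u ≠ 0 → MonotoneOn (fun t : ℝ => I (t • u) / t ^ 2) (Ioi 0))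
    (hI3zero : ∀ u : E, u ≠ 0 → Tendsto (fun t : ℝ => I (t • u) / t ^ 2) (𝓝[>] 0) (𝓝 0))
    (hI3top : ∀ u : E, u ≠ 0 → Tendsto (fun t : ℝ => I (t • u) / t ^ 2) atTop atTop) :
    ∀ ε : ℝ, 0 < ε → ∀ C : Set E, IsCompact C → C ⊆ {u : E | u ≠ 0} →
      ∃ κ : ℝ, 0 < κ ∧ ∀ u ∈ C, ∀ t : ℝ, ε ≤ t → κ * t ^ 2 ≤ I (t • u) := by
  intro ε hε C hC hC0
  exact uniform_quadratic_lower_bound_on_compacts_general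
    (hIcont.lowerSemicontinuous.lowerSemicontinuousOn _) hI2.2 (fun _ ht ↦ pow_pos ht 2)
    hI3mono hε hC hC0
end
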